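/- Let N ≥ 1 and s ∈ (0,1) with N > 2s, and let Φ : (−1/2, 1/2) × ℝ^N → ℝ^N, written Φ_t(x) := Φ(t,x), satisfy: Φ_0 = id; there is c ≥ 1 with c⁻¹|u−v| ≤ |Φ_t(u) − Φ_t(v)| ≤ c|u−v| for all t, u, v; for each x the map t ↦ Φ_t(x) is differentiable with derivative V_t(x) := ∂_tΦ_t(x) continuous in t; and there is C₀ > 0 such that for all t the map V_t is differentiable in x with |V_t(u) − V_t(v)| ≤ C₀|u−v|, ‖D_xV_t(u)‖ ≤ C₀ and ‖D_xV_t(u) − D_xV_t(v)‖ ≤ C₀|u−v| for all u, v. Let Ω ⊂ ℝ^N be a bounded open set, x ∈ Ω, and for t ≠ 0 define g^t_x(y) := b_{N,s} · ( |Φ_t(x) − Φ_t(y)|^{2s−N} − |x−y|^{2s−N} ) / t. Then: (i) there exists C > 0 such that |g^t_x(y)| ≤ C|x−y|^{2s−N} for all y ≠ x and all t ≠ 0 in (−1/2,1/2); and (ii) for every α ∈ (0,1) there exist C₀' > 0 and t₀ ∈ (0,1/2) such that for all t with 0 < |t| < t₀, all y ∈ ∂Ω and all z ∈ ℝ^N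 \ Ω with z ≠ y: |g^t_x(y)| + |g^t_x(y) − g^t_x(z)| / |y−z|^α ≤ C₀'. -/

import Mathlib

/-!
Write `p = 2s - N < 0` and `w_τ(y) = Φ_τ(x) - Φ_τ(y)`. Since `Φ_0 = id`, the quantity
`g^t_x(y)` is `b_{N,s}` times the difference quotient at `0` of `τ ↦ |w_τ(y)|^p`, whose derivative
is `radialDeriv p w v = p |w|^{p-2} ⟪w, v⟫` with `v = V_τ(x) - V_τ(y)`
(`hasDerivAt_norm_comp_rpow`).
Every bound thus follows from the mean value inequality in `τ` (`quotient_bound`) and a bound on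
this derivative that is uniform in `τ`.

For (i), Cauchy–Schwarz gives `|p| |w|^{p-1} |v|`, and the Lipschitz bounds on `Φ_τ` and `V_τ`
compare `|w|` and `|v|` with `|x - y|` (`radialDeriv_bound`). For (ii), apply the mean value inequality to
`|w_τ(y)|^p - |w_τ(z)|^p`. Points outside `Ω` are at distance at least some `δ > 0` from `x`. If
`|y - z| ≥ 1`, the bound from (i) at `y` and `z` suffices. If `|y - z| < 1`, then `z` stays in a
bounded set, where `radialDeriv` is Lipschitz away from `w = 0` (`radialDeriv_lipschitz`), so the
derivative is at most a constant times `|y - z| ≤ |y - z|^α`.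
-/

noncomputable section

/-- The constant `b_{N,s} = π^{-N/2} 4^{-s} Γ((N-2s)/2) / Γ(s)` of the fundamental solution. -/
def bNs (N : ℕ) (s : ℝ) : ℝ :=
  Real.pi ^ (-(N : ℝ) / 2) * (4 : ℝ) ^ (-s) *
    Real.Gamma (((N : ℝ) - 2 * s) / 2) / Real.Gamma s

/-- The difference quotient `g^t_x(y) = b_{N,s} (|Φ_t(x)-Φ_t(y)|^{2s-N} - |x-y|^{2s-N})/t`. -/
def gtx (N : ℕ) (s : ℝ)
    (Φ : ℝ → EuclideanSpace ℝ (Fin N) → EuclideanSpace ℝ (Fin N))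
    (t : ℝ) (x y : EuclideanSpace ℝ (Fin N)) : ℝ :=
  bNs N s * ((‖Φ t x - Φ t y‖ ^ (2 * s - (N : ℝ)) - ‖x - y‖ ^ (2 * s - (N : ℝ))) / t)

section Helpers

variable {E : Type*} [NormedAddCommGroup E] [InnerProductSpace ℝ E]

/-- The derivative of `w ↦ |w|^p` at `w ≠ 0` in the direction `v`. -/
def radialDeriv (p : ℝ) (w v : E) : ℝ := p * ‖w‖ ^ (p - 2) * inner ℝ w v

lemma hasDerivAt_norm_comp_rpow {p : ℝ} {f : ℝ → E} {df : E} {t : ℝ} (hf : HasDerivAt f df t)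
    (h0 : f t ≠ 0) : HasDerivAt (fun τ => ‖f τ‖ ^ p) (radialDeriv p (f t) df) t := by
  -- `‖f‖ ^ p = (‖f‖ ^ 2) ^ (p / 2)`, and `‖f‖ ^ 2` is differentiable.
  have hpow : ∀ (a q : ℝ), 0 ≤ a → (a ^ 2) ^ q = a ^ (2 * q) := by
    intro a q ha
    rw [Real.rpow_mul ha]
    norm_num
  have h1 := (hf.norm_sq).rpow_const (p := p / 2) (Or.inl (by simpa using h0))
  have hfun : (fun τ => ‖f τ‖ ^ p) = fun τ => (‖f τ‖ ^ 2) ^ (p / 2) := by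
    funext τ
    rw [hpow _ _ (norm_nonneg _)]
    congr 1
    ring
  rw [hfun]
  convert h1 using 1
  rw [hpow _ _ (norm_nonneg _), radialDeriv, show 2 * (p / 2 - 1) = p - 2 by ring]
  ring

lemma radialDeriv_bound {p c C₀ r : ℝ} (hp : p < 0) (hc : 1 ≤ c) (hC₀ : 0 < C₀) (hr : 0 < r)
    {w v : E} (hw : c⁻¹ * r ≤ ‖w‖) (hv : ‖v‖ ≤ C₀ * r) :
    |radialDeriv p w v| ≤ |p| * C₀ * (c⁻¹) ^ (p - 1) * r ^ p := by
  have hc0 : 0 < c⁻¹ := by positivity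
  have hw0 : 0 < ‖w‖ := lt_of_lt_of_le (by positivity) hw
  calc |radialDeriv p w v| = |p| * ‖w‖ ^ (p - 2) * |inner ℝ w v| := by
        rw [radialDeriv, abs_mul, abs_mul, abs_of_nonneg (Real.rpow_nonneg (norm_nonneg w) _)]
    _ ≤ |p| * ‖w‖ ^ (p - 2) * (‖w‖ * ‖v‖) := by
        gcongr
        exact abs_real_inner_le_norm w v
    _ = |p| * ‖w‖ ^ (p - 1) * ‖v‖ := by
        rw [show p - 1 = (p - 2) + 1 by ring, Real.rpow_add_one hw0.ne']
        ring
    _ ≤ |p| * (c⁻¹ * r) ^ (p - 1) * (C₀ * r) := by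
        have := Real.rpow_le_rpow_of_nonpos (by positivity : 0 < c⁻¹ * r) hw
          (by linarith : p - 1 ≤ 0)
        gcongr
    _ = |p| * C₀ * (c⁻¹) ^ (p - 1) * r ^ p := by
        rw [Real.mul_rpow hc0.le hr.le, Real.rpow_sub_one hr.ne']
        field_simp

lemma rpow_lipschitz {q ρ a b : ℝ} (hq : q < 0) (hρ : 0 < ρ) (ha : ρ ≤ a) (hb : ρ ≤ b) :
    |a ^ q - b ^ q| ≤ |q| * ρ ^ (q - 1) * |a - b| := by
  have := (convex_Ici ρ).norm_image_sub_le_of_norm_hasDerivWithin_le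
    (f := fun u : ℝ => u ^ q) (f' := fun u => q * u ^ (q - 1)) (C := |q| * ρ ^ (q - 1))
    (fun u hu => (Real.hasDerivAt_rpow_const
      (Or.inl (hρ.trans_le hu).ne')).hasDerivWithinAt) (fun u hu => by
        have hu' : ρ ≤ u := hu
        rw [Real.norm_eq_abs, abs_mul, abs_of_nonneg (Real.rpow_nonneg (hρ.le.trans hu') _)]
        have := Real.rpow_le_rpow_of_nonpos hρ hu' (by linarith : q - 1 ≤ 0)
        gcongr) (Set.mem_Ici.2 hb) (Set.mem_Ici.2 ha)
  simpa [Real.norm_eq_abs] using this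

/-- Lipschitz dependence of `radialDeriv` on its arguments, for `w` and `w'` bounded and away
from `0`, and `v` bounded. -/
lemma radialDeriv_lipschitz {p ρ R c C₀ d : ℝ} (hp : p < 0) (hρ : 0 < ρ)
    {w v w' v' : E} (hw : ρ ≤ ‖w‖) (hw' : ρ ≤ ‖w'‖) (hwR : ‖w‖ ≤ R) (hwR' : ‖w'‖ ≤ R)
    (hvR : ‖v‖ ≤ R) (hd : 0 ≤ d) (hc : 0 ≤ c) (hww : ‖w - w'‖ ≤ c * d)
    (hvv : ‖v - v'‖ ≤ C₀ * d) :
    |radialDeriv p w v - radialDeriv p w' v'| ≤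
      (|p| * (|p - 2| * ρ ^ (p - 2 - 1) * c) * (R * R) + |p| * ρ ^ (p - 2) * (c * R + R * C₀))
        * d := by
  have hR : 0 ≤ R := (norm_nonneg _).trans hwR
  have hsplit : radialDeriv p w v - radialDeriv p w' v' =
      p * (‖w‖ ^ (p - 2) - ‖w'‖ ^ (p - 2)) * inner ℝ w v +
        p * ‖w'‖ ^ (p - 2) * (inner ℝ (w - w') v + inner ℝ w' (v - v')) := by
    simp only [radialDeriv, inner_sub_left, inner_sub_right]
    ring
  have h1 : |‖w‖ ^ (p - 2) - ‖w'‖ ^ (p - 2)| ≤ |p - 2| * ρ ^ (p - 2 - 1) * (c * d) := by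
    refine (rpow_lipschitz (by linarith) hρ hw hw').trans ?_
    gcongr
    exact (abs_norm_sub_norm_le w w').trans hww
  have h2 : |inner ℝ w v| ≤ R * R := (abs_real_inner_le_norm w v).trans (by gcongr)
  have h3 : |inner ℝ (w - w') v| ≤ c * d * R :=
    (abs_real_inner_le_norm _ _).trans (by gcongr)
  have h4 : |inner ℝ w' (v - v')| ≤ R * (C₀ * d) :=
    (abs_real_inner_le_norm _ _).trans (by gcongr)
  have h5 : ‖w'‖ ^ (p - 2) ≤ ρ ^ (p - 2) :=
    Real.rpow_le_rpow_of_nonpos hρ hw' (by linarith)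
  have h6 : |inner ℝ (w - w') v + inner ℝ w' (v - v')| ≤ c * d * R + R * (C₀ * d) :=
    (abs_add_le _ _).trans (add_le_add h3 h4)
  rw [hsplit]
  calc _ ≤ |p| * |‖w‖ ^ (p - 2) - ‖w'‖ ^ (p - 2)| * |inner ℝ w v| +
        |p| * ‖w'‖ ^ (p - 2) * |inner ℝ (w - w') v + inner ℝ w' (v - v')| := by
        refine (abs_add_le _ _).trans (le_of_eq ?_)
        rw [abs_mul, abs_mul, abs_mul, abs_mul,
          abs_of_nonneg (Real.rpow_nonneg (norm_nonneg w') _)]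
    _ ≤ |p| * (|p - 2| * ρ ^ (p - 2 - 1) * (c * d)) * (R * R) +
        |p| * ρ ^ (p - 2) * (c * d * R + R * (C₀ * d)) := by gcongr
    _ = _ := by ring

/-- Mean value inequality for the difference quotient at `0`. -/
lemma quotient_bound {F F' : ℝ → ℝ} {K t : ℝ}
    (hF : ∀ τ ∈ Set.Ioo (-(1/2) : ℝ) (1/2), HasDerivAt F (F' τ) τ)
    (hK : ∀ τ ∈ Set.Ioo (-(1/2) : ℝ) (1/2), |F' τ| ≤ K)
    (ht : t ∈ Set.Ioo (-(1/2) : ℝ) (1/2)) (ht0 : t ≠ 0) : |(F t - F 0) / t| ≤ K := by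
  have := (convex_Ioo (-(1/2) : ℝ) (1/2)).norm_image_sub_le_of_norm_hasDerivWithin_le
    (fun τ hτ => (hF τ hτ).hasDerivWithinAt) hK
    (show (0 : ℝ) ∈ Set.Ioo (-(1/2) : ℝ) (1/2) by norm_num) ht
  rw [abs_div, div_le_iff₀ (abs_pos.2 ht0)]
  simpa using this

end Helpers

/-- Uniform bounds on the difference quotients `g^t_x`:
(i) `|g^t_x(y)| ≤ C |x-y|^{2s-N}`; (ii) uniform Hölder control of `g^t_x` between the
boundary `∂Ω` and the exterior of `Ω`. -/
theorem statement15 (N : ℕ) (hN : 1 ≤ N) (s : ℝ) (hs : s ∈ Set.Ioo (0 : ℝ) 1)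
    (hNs : 2 * s < N)
    (Φ V : ℝ → EuclideanSpace ℝ (Fin N) → EuclideanSpace ℝ (Fin N))
    (c : ℝ) (hc : 1 ≤ c) (C₀ : ℝ) (hC₀ : 0 < C₀)
    (hΦ0 : Φ 0 = id)
    (hlow : ∀ t ∈ Set.Ioo (-(1/2) : ℝ) (1/2), ∀ u v,
      c⁻¹ * ‖u - v‖ ≤ ‖Φ t u - Φ t v‖)
    (hup : ∀ t ∈ Set.Ioo (-(1/2) : ℝ) (1/2), ∀ u v,
      ‖Φ t u - Φ t v‖ ≤ c * ‖u - v‖)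
    (hderivt : ∀ x, ∀ t ∈ Set.Ioo (-(1/2) : ℝ) (1/2),
      HasDerivAt (fun τ => Φ τ x) (V t x) t)
    (hVcont : ∀ x, ContinuousOn (fun t => V t x) (Set.Ioo (-(1/2) : ℝ) (1/2)))
    (hVdiff : ∀ t ∈ Set.Ioo (-(1/2) : ℝ) (1/2), Differentiable ℝ (V t))
    (hVlip : ∀ t ∈ Set.Ioo (-(1/2) : ℝ) (1/2), ∀ u v,
      ‖V t u - V t v‖ ≤ C₀ * ‖u - v‖)
    (hDVbound : ∀ t ∈ Set.Ioo (-(1/2) : ℝ) (1/2), ∀ u, ‖fderiv ℝ (V t) u‖ ≤ C₀)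
    (hDVlip : ∀ t ∈ Set.Ioo (-(1/2) : ℝ) (1/2), ∀ u v,
      ‖fderiv ℝ (V t) u - fderiv ℝ (V t) v‖ ≤ C₀ * ‖u - v‖)
    (Ω : Set (EuclideanSpace ℝ (Fin N))) (hΩo : IsOpen Ω)
    (hΩb : Bornology.IsBounded Ω)
    (x : EuclideanSpace ℝ (Fin N)) (hx : x ∈ Ω) :
    (∃ C > 0, ∀ t ∈ Set.Ioo (-(1/2) : ℝ) (1/2), t ≠ 0 →
        ∀ y : EuclideanSpace ℝ (Fin N), y ≠ x →
          |gtx N s Φ t x y| ≤ C * ‖x - y‖ ^ (2 * s - (N : ℝ))) ∧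
    (∀ α ∈ Set.Ioo (0 : ℝ) 1, ∃ C₀' > 0, ∃ t₀ ∈ Set.Ioo (0 : ℝ) (1/2),
        ∀ t : ℝ, 0 < |t| → |t| < t₀ →
          ∀ y ∈ frontier Ω, ∀ z ∈ Ωᶜ, z ≠ y →
            |gtx N s Φ t x y| +
              |gtx N s Φ t x y - gtx N s Φ t x z| / ‖y - z‖ ^ α ≤ C₀') := by
  obtain ⟨hs0, hs1⟩ := hs
  set p : ℝ := 2 * s - N with hpdef
  have hp : p < 0 := by linarith
  have hc0 : 0 < c⁻¹ := by positivity
  set I := Set.Ioo (-(1/2) : ℝ) (1/2) with hI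
  have hder : ∀ y, y ≠ x → ∀ τ ∈ I, HasDerivAt (fun τ => ‖Φ τ x - Φ τ y‖ ^ p)
      (radialDeriv p (Φ τ x - Φ τ y) (V τ x - V τ y)) τ := by
    intro y hy τ hτ
    refine hasDerivAt_norm_comp_rpow (f := fun τ => Φ τ x - Φ τ y)
      ((hderivt x τ hτ).sub (hderivt y τ hτ)) (norm_pos_iff.1 ?_)
    have : 0 < ‖x - y‖ := norm_pos_iff.2 (sub_ne_zero.2 hy.symm)
    exact lt_of_lt_of_le (by positivity) (hlow τ hτ x y)
  set A := |p| * C₀ * (c⁻¹) ^ (p - 1) with hA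
  have hA0 : 0 ≤ A := by positivity
  have hbd : ∀ y, y ≠ x → ∀ τ ∈ I,
      |radialDeriv p (Φ τ x - Φ τ y) (V τ x - V τ y)| ≤ A * ‖x - y‖ ^ p := by
    intro y hy τ hτ
    exact radialDeriv_bound hp hc hC₀ (norm_pos_iff.2 (sub_ne_zero.2 hy.symm))
      (hlow τ hτ x y) (hVlip τ hτ x y)
  have hgtx : ∀ t y, gtx N s Φ t x y =
      bNs N s * ((‖Φ t x - Φ t y‖ ^ p - ‖Φ 0 x - Φ 0 y‖ ^ p) / t) := by
    intro t y
    simp [gtx, hΦ0, hpdef]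
  have hi : ∀ t ∈ I, t ≠ 0 → ∀ y, y ≠ x →
      |gtx N s Φ t x y| ≤ (|bNs N s| * A + 1) * ‖x - y‖ ^ p := by
    intro t ht ht0 y hy
    have hq := quotient_bound (hder y hy) (hbd y hy) ht ht0
    have hr : 0 ≤ ‖x - y‖ ^ p := by positivity
    rw [hgtx, abs_mul]
    calc _ ≤ |bNs N s| * (A * ‖x - y‖ ^ p) := by gcongr
      _ ≤ _ := by nlinarith
  refine ⟨⟨|bNs N s| * A + 1, by positivity, hi⟩, ?_⟩
  rintro α ⟨hα0, hα1⟩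
  obtain ⟨δ, hδ, hball⟩ := Metric.isOpen_iff.1 hΩo x hx
  have hfar : ∀ y ∉ Ω, δ ≤ ‖x - y‖ := by
    intro y hy
    by_contra! h
    exact hy (hball (by rwa [Metric.mem_ball, dist_comm, dist_eq_norm]))
  have hne : ∀ y ∉ Ω, y ≠ x := fun y hy h => hy (h ▸ hx)
  have hfarp : ∀ y ∉ Ω, ‖x - y‖ ^ p ≤ δ ^ p := fun y hy =>
    Real.rpow_le_rpow_of_nonpos hδ (hfar y hy) hp.le
  obtain ⟨R, hR⟩ := hΩb.closure.subset_closedBall x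
  have hfront : ∀ y ∈ frontier Ω, ‖x - y‖ ≤ R := by
    intro y hy
    have := hR (frontier_subset_closure hy)
    rwa [Metric.mem_closedBall, dist_comm, dist_eq_norm] at this
  have hR0 : 0 ≤ R := by
    have := hR (subset_closure hx)
    simpa using this
  -- `R'` bounds all increments of `Φ_τ` and `V_τ` between `x` and points within distance `R + 1`.
  set R' := (c + C₀) * (R + 1) with hR'
  have hR'0 : 0 ≤ R' := by positivity
  set ρ := c⁻¹ * δ with hρdef
  have hρ : 0 < ρ := by positivity
  set L := |p| * (|p - 2| * ρ ^ (p - 2 - 1) * c) * (R' * R') +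
    |p| * ρ ^ (p - 2) * (c * R' + R' * C₀) with hL
  have hL0 : 0 ≤ L := by positivity
  set M := A * δ ^ p with hM
  have hM0 : 0 ≤ M := by positivity
  set K := 2 * M + L with hK
  have hmain : ∀ y ∈ frontier Ω, ∀ z ∈ Ωᶜ, z ≠ y → ∀ τ ∈ I,
      |radialDeriv p (Φ τ x - Φ τ y) (V τ x - V τ y) -
        radialDeriv p (Φ τ x - Φ τ z) (V τ x - V τ z)| ≤ K * ‖y - z‖ ^ α := by
    intro y hy z hz hzy τ hτ
    have hyΩ : y ∉ Ω := by
      rw [hΩo.frontier_eq] at hy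
      exact hy.2
    have hd : 0 < ‖y - z‖ := norm_pos_iff.2 (sub_ne_zero.2 hzy.symm)
    rcases le_or_gt 1 ‖y - z‖ with h1 | h1
    · have e1 := (hbd y (hne y hyΩ) τ hτ).trans (mul_le_mul_of_nonneg_left (hfarp y hyΩ) hA0)
      have e2 := (hbd z (hne z hz) τ hτ).trans (mul_le_mul_of_nonneg_left (hfarp z hz) hA0)
      have e3 : 1 ≤ ‖y - z‖ ^ α := Real.one_le_rpow h1 hα0.le
      have e4 := abs_sub (radialDeriv p (Φ τ x - Φ τ y) (V τ x - V τ y))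
        (radialDeriv p (Φ τ x - Φ τ z) (V τ x - V τ z))
      calc _ ≤ K * 1 := by linarith
        _ ≤ K * ‖y - z‖ ^ α := mul_le_mul_of_nonneg_left e3 (by positivity)
    · have e3 : ‖y - z‖ ≤ ‖y - z‖ ^ α := by
        simpa using Real.rpow_le_rpow_of_exponent_ge hd h1.le hα1.le
      have hyR := hfront y hy
      have hzR : ‖x - z‖ ≤ R + 1 := by
        have := norm_sub_le_norm_sub_add_norm_sub x y z
        linarith
      have e := radialDeriv_lipschitz (p := p) (ρ := ρ) (R := R') (c := c) (C₀ := C₀)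
        (d := ‖y - z‖) (w := Φ τ x - Φ τ y) (v := V τ x - V τ y)
        (w' := Φ τ x - Φ τ z) (v' := V τ x - V τ z) hp hρ
        ((mul_le_mul_of_nonneg_left (hfar y hyΩ) hc0.le).trans (hlow τ hτ x y))
        ((mul_le_mul_of_nonneg_left (hfar z hz) hc0.le).trans (hlow τ hτ x z))
        ((hup τ hτ x y).trans (by rw [hR']; gcongr <;> linarith))
        ((hup τ hτ x z).trans (by rw [hR']; gcongr; linarith))
        ((hVlip τ hτ x y).trans (by rw [hR']; gcongr <;> linarith))
        hd.le (by linarith)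
        (by rw [sub_sub_sub_cancel_left, norm_sub_rev]; exact hup τ hτ y z)
        (by rw [sub_sub_sub_cancel_left, norm_sub_rev]; exact hVlip τ hτ y z)
      refine e.trans ?_
      rw [← hL]
      calc L * ‖y - z‖ ≤ L * ‖y - z‖ ^ α := mul_le_mul_of_nonneg_left e3 hL0
        _ ≤ K * ‖y - z‖ ^ α := mul_le_mul_of_nonneg_right (by linarith) (by positivity)
  refine ⟨(|bNs N s| * A + 1) * δ ^ p + |bNs N s| * K, by positivity, 1 / 4, by norm_num, ?_⟩
  intro t ht0 ht y hy z hz hzy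
  have htI : t ∈ I := by
    have := abs_lt.1 ht
    constructor <;> linarith
  have ht0' : t ≠ 0 := abs_pos.1 ht0
  have hyΩ : y ∉ Ω := by
    rw [hΩo.frontier_eq] at hy
    exact hy.2
  have hd : 0 < ‖y - z‖ := norm_pos_iff.2 (sub_ne_zero.2 hzy.symm)
  refine add_le_add ((hi t htI ht0' y (hne y hyΩ)).trans
    (mul_le_mul_of_nonneg_left (hfarp y hyΩ) (by positivity))) ?_
  rw [div_le_iff₀ (by positivity)]
  have hq := quotient_bound
    (fun τ hτ => (hder y (hne y hyΩ) τ hτ).sub (hder z (hne z hz) τ hτ))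
    (hmain y hy z hz hzy) htI ht0'
  have heq : gtx N s Φ t x y - gtx N s Φ t x z = bNs N s *
      (((‖Φ t x - Φ t y‖ ^ p - ‖Φ t x - Φ t z‖ ^ p) -
        (‖Φ 0 x - Φ 0 y‖ ^ p - ‖Φ 0 x - Φ 0 z‖ ^ p)) / t) := by
    rw [hgtx, hgtx]
    ring
  rw [heq, abs_mul, mul_assoc]
  exact mul_le_mul_of_nonneg_left hq (abs_nonneg _)
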